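/- For every integer n ≥ 2, the homogeneous polynomial g_{2n+2}(x,y) = (x² − y²)(x^{2n} + y^{2n}) of degree 2n+2 is hyperbolic, i.e., its Hessian polynomial is strictly negative on ℝ² \ {(0,0)}. -/

import Mathlib

open MvPolynomial Real

/-- The Hessian polynomial `f_xx * f_yy - f_xy ^ 2` of a bivariate real polynomial. -/
noncomputable def Hess (f : MvPolynomial (Fin 2) ℝ) : MvPolynomial (Fin 2) ℝ :=
  pderiv 0 (pderiv 0 f) * pderiv 1 (pderiv 1 f) - (pderiv 1 (pderiv 0 f)) ^ 2

/-- A bivariate polynomial is hyperbolic if its Hessian is negative off the origin. -/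
def Hyperbolic (f : MvPolynomial (Fin 2) ℝ) : Prop :=
  ∀ x y : ℝ, ¬(x = 0 ∧ y = 0) → eval ![x, y] (Hess f) < 0

/-!
Write `S = x ^ (2 * n) + y ^ (2 * n)` and `W = (x ^ 2 - y ^ 2) ^ 2 * (x * y) ^ (2 * (n - 1))`. Up to
the factor `-4 * (2 * n + 1)`, the Hessian is `(n + 1) * (S ^ 2 - n * (2 * n - 1) * W)` plus a
nonnegative term, and `0 < S`, so it is enough to prove `2 * n ^ 2 * W ≤ S ^ 2`. For `x, y ≥ 0`,
apply the inequality of arithmetic and geometric means to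
`S = (x ^ n - y ^ n) ^ 2 + 2 * (x * y) ^ n`. What remains is the lower bound
`n / 2 * |x ^ 2 - y ^ 2| * (x * y) ^ ((n - 2) / 2)` for `|x ^ n - y ^ n|`, which follows from the
midpoint estimate for the integral of the convex function `n * t ^ (n - 1)` between `y` and `x`.
-/

section OrderedField

variable {K : Type*} [Field K] [LinearOrder K] [IsStrictOrderedRing K]

theorem midpoint_pow_mul_sub_le_pow_sub_pow (n : ℕ) {p q : K} (hq : 0 ≤ q) (hqp : q ≤ p) :
    (n + 1) * ((p + q) / 2) ^ n * (p - q) ≤ p ^ (n + 1) - q ^ (n + 1) := by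
  have hp : 0 ≤ p := hq.trans hqp
  induction n with
  | zero => simp
  | succ n ih =>
    have hconvex : ((p + q) / 2) ^ (n + 1) ≤ (p ^ (n + 1) + q ^ (n + 1)) / 2 := by
      have := add_pow_le hp hq (n + 1)
      rw [Nat.add_sub_cancel] at this
      rw [div_pow, div_le_div_iff₀ (by positivity) two_pos, pow_succ 2]
      linarith
    calc ((n + 1 : ℕ) + 1) * ((p + q) / 2) ^ (n + 1) * (p - q)
        = (p + q) / 2 * ((n + 1) * ((p + q) / 2) ^ n * (p - q)) +
            (p - q) * ((p + q) / 2) ^ (n + 1) := by push_cast; ring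
      _ ≤ (p + q) / 2 * (p ^ (n + 1) - q ^ (n + 1)) +
            (p - q) * ((p ^ (n + 1) + q ^ (n + 1)) / 2) := by gcongr
      _ = p ^ (n + 1 + 1) - q ^ (n + 1 + 1) := by ring

theorem sq_sub_sq_mul_pow_le_pow_sub_pow_sq (n : ℕ) {p q : K} (hp : 0 ≤ p) (hq : 0 ≤ q) :
    (n + 2) ^ 2 * (p ^ 2 - q ^ 2) ^ 2 * (p * q) ^ n ≤ 4 * (p ^ (n + 2) - q ^ (n + 2)) ^ 2 := by
  wlog hqp : q ≤ p generalizing p q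
  · rw [sub_sq_comm (p ^ 2), sub_sq_comm (p ^ (n + 2)), mul_comm p]
    exact this hq hp (le_of_not_ge hqp)
  have hmean : p * q ≤ ((p + q) / 2) ^ 2 := by linarith [sq_nonneg (p - q)]
  have hmidpoint := midpoint_pow_mul_sub_le_pow_sub_pow (n + 1) hq hqp
  calc (n + 2) ^ 2 * (p ^ 2 - q ^ 2) ^ 2 * (p * q) ^ n
      ≤ (n + 2) ^ 2 * (p ^ 2 - q ^ 2) ^ 2 * (((p + q) / 2) ^ 2) ^ n := by gcongr
    _ = 4 * (((n + 1 : ℕ) + 1) * ((p + q) / 2) ^ (n + 1) * (p - q)) ^ 2 := by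
        rw [← pow_mul]; push_cast; ring
    _ ≤ 4 * (p ^ (n + 2) - q ^ (n + 2)) ^ 2 := by gcongr

theorem sq_sub_sq_mul_pow_le_pow_add_pow_sq {n : ℕ} (hn : 2 ≤ n) (x y : K) :
    2 * n ^ 2 * ((x ^ 2 - y ^ 2) ^ 2 * (x * y) ^ (2 * (n - 1))) ≤
      (x ^ (2 * n) + y ^ (2 * n)) ^ 2 := by
  wlog hxy : 0 ≤ x ∧ 0 ≤ y generalizing x y
  · simpa only [pow_mul, mul_pow, sq_abs] using this |x| |y| ⟨abs_nonneg x, abs_nonneg y⟩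
  obtain ⟨hx, hy⟩ := hxy
  obtain ⟨m, rfl⟩ := Nat.exists_eq_add_of_le' hn
  calc 2 * ((m + 2 : ℕ) : K) ^ 2 * ((x ^ 2 - y ^ 2) ^ 2 * (x * y) ^ (2 * (m + 1)))
      = 2 * (x * y) ^ (m + 2) * ((m + 2) ^ 2 * (x ^ 2 - y ^ 2) ^ 2 * (x * y) ^ m) := by
        push_cast; ring
    _ ≤ 2 * (x * y) ^ (m + 2) * (4 * (x ^ (m + 2) - y ^ (m + 2)) ^ 2) :=
        mul_le_mul_of_nonneg_left (sq_sub_sq_mul_pow_le_pow_sub_pow_sq m hx hy)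
          (by positivity)
    _ = 4 * (x ^ (m + 2) - y ^ (m + 2)) ^ 2 * (2 * (x * y) ^ (m + 2)) := by ring
    _ ≤ ((x ^ (m + 2) - y ^ (m + 2)) ^ 2 + 2 * (x * y) ^ (m + 2)) ^ 2 :=
        four_mul_le_sq_add _ _
    _ = (x ^ (2 * (m + 2)) + y ^ (2 * (m + 2))) ^ 2 := by ring

end OrderedField

theorem pow_two_mul_add_pow_two_mul_pos {R : Type*} [Ring R] [LinearOrder R]
    [IsStrictOrderedRing R] (n : ℕ) {x y : R} (hxy : ¬(x = 0 ∧ y = 0)) :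
    0 < x ^ (2 * n) + y ^ (2 * n) := by
  have hx := (even_two_mul n).pow_nonneg x
  have hy := (even_two_mul n).pow_nonneg y
  rcases not_and_or.1 hxy with h | h
  · exact add_pos_of_pos_of_nonneg ((even_two_mul n).pow_pos h) hy
  · exact add_pos_of_nonneg_of_pos hx ((even_two_mul n).pow_pos h)

theorem eval_Hess_sq_sub_sq_mul_pow_add_pow (n : ℕ) (x y : ℝ) :
    eval ![x, y] (Hess ((X 0 ^ 2 - X 1 ^ 2) * (X 0 ^ (2 * n) + X 1 ^ (2 * n)))) =
      -(4 * (2 * n + 1)) * ((n + 1) * ((x ^ (2 * n) + y ^ (2 * n)) ^ 2 -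
          n * (2 * n - 1) * ((x ^ 2 - y ^ 2) ^ 2 * (x * y) ^ (2 * (n - 1)))) +
        n * (x * y * (x ^ (2 * (n - 1)) + y ^ (2 * (n - 1)))) ^ 2) := by
  have hpderiv_two (i : Fin 2) : pderiv i (2 : MvPolynomial (Fin 2) ℝ) = 0 :=
    (pderiv i).map_natCast 2
  rcases n with _ | n
  · simp [Hess, pderiv_X, hpderiv_two]
    ring
  set g : MvPolynomial (Fin 2) ℝ :=
    (X 0 ^ 2 - X 1 ^ 2) * (X 0 ^ (2 * (n + 1)) + X 1 ^ (2 * (n + 1))) with hg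
  have hpred : 2 * (n + 1) - 1 = 2 * n + 1 := by omega
  have hxx : eval ![x, y] (pderiv 0 (pderiv 0 g)) =
      (2 * n + 4) * (2 * n + 3) * x ^ (2 * n + 2) -
        (2 * n + 2) * (2 * n + 1) * x ^ (2 * n) * y ^ 2 + 2 * y ^ (2 * n + 2) := by
    simp [hg, pderiv_X, hpred, hpderiv_two]
    ring
  have hyy : eval ![x, y] (pderiv 1 (pderiv 1 g)) =
      -((2 * n + 4) * (2 * n + 3) * y ^ (2 * n + 2) -
        (2 * n + 2) * (2 * n + 1) * x ^ 2 * y ^ (2 * n) + 2 * x ^ (2 * n + 2)) := by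
    simp [hg, pderiv_X, hpred, hpderiv_two]
    ring
  have hxy : eval ![x, y] (pderiv 1 (pderiv 0 g)) =
      4 * (n + 1) * (x * y) * (y ^ (2 * n) - x ^ (2 * n)) := by
    simp [hg, pderiv_X, hpred, hpderiv_two]
    ring
  rw [Hess, map_sub, map_mul, map_pow, hxx, hyy, hxy, Nat.add_sub_cancel]
  push_cast
  ring

theorem g_hyperbolic (n : ℕ) (hn : 2 ≤ n) :
    Hyperbolic ((X 0 ^ 2 - X 1 ^ 2) * (X 0 ^ (2 * n) + X 1 ^ (2 * n))) := by
  intro x y hxy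
  rw [eval_Hess_sq_sub_sq_mul_pow_add_pow]
  have hS := pow_pos (pow_two_mul_add_pow_two_mul_pos n hxy) 2
  have hW := sq_sub_sq_mul_pow_le_pow_add_pow_sq hn x y
  set S := x ^ (2 * n) + y ^ (2 * n)
  set W := (x ^ 2 - y ^ 2) ^ 2 * (x * y) ^ (2 * (n - 1))
  have hn_one : (1 : ℝ) ≤ n := by exact_mod_cast one_le_two.trans hn
  have hlt : n * (2 * n - 1) * W < S ^ 2 := by
    refine lt_of_mul_lt_mul_left ?_ (by positivity : (0 : ℝ) ≤ 2 * n)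
    calc 2 * n * (n * (2 * n - 1) * W) = (2 * n - 1) * (2 * n ^ 2 * W) := by ring
      _ ≤ (2 * n - 1) * S ^ 2 := mul_le_mul_of_nonneg_left hW (by linarith)
      _ < 2 * n * S ^ 2 := by linarith
  exact mul_neg_of_neg_of_pos (neg_lt_zero.2 (by positivity))
    (add_pos_of_pos_of_nonneg (mul_pos (by positivity) (sub_pos.2 hlt)) (by positivity))
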